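/- Let u ≤ w in S_n and suppose (u(i),u(j)) ∈ E_w(u)^+ and (u(i'),u(j')) ∈ E_w(u)^+ with 1 ≤ i < j ≤ n and 1 ≤ i' < j' ≤ n. If i < i' < j and u(i) > u(i'), then u(i) > u(j') in case j' < j, and u(j) > u(j') in case j < j'. -/

import Mathlib

open Equiv

/-- The length (number of inversions) of a permutation of `Fin n`. -/
def invLen {n : ℕ} (u : Equiv.Perm (Fin n)) : ℕ :=
  (Finset.univ.filter (fun p : Fin n × Fin n => p.1 < p.2 ∧ u p.2 < u p.1)).card

/-- A permutation is a transposition if it swaps two distinct elements. -/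
def IsTransposition {n : ℕ} (σ : Equiv.Perm (Fin n)) : Prop :=
  ∃ a b : Fin n, a ≠ b ∧ σ = Equiv.swap a b

/-- Bruhat order on permutations: `v ≤ w` iff `w` is obtained from `v` by left
multiplication by transpositions, each strictly increasing the length. -/
def BruhatLE {n : ℕ} (v w : Equiv.Perm (Fin n)) : Prop :=
  ∃ (m : ℕ) (c : ℕ → Equiv.Perm (Fin n)),
    c 0 = v ∧ c m = w ∧
    ∀ k, k < m →
      (∃ τ : Equiv.Perm (Fin n), IsTransposition τ ∧ c (k + 1) = τ * c k) ∧
      invLen (c k) < invLen (c (k + 1))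

/-- The edge set `Ẽ_w(u)`. -/
def Etilde {n : ℕ} (w u : Equiv.Perm (Fin n)) : Set (Fin n × Fin n) :=
  { p | ∃ i j : Fin n, i < j ∧ p = (u i, u j) ∧
      BruhatLE (Equiv.swap (u i) (u j) * u) w ∧
      |(invLen (Equiv.swap (u i) (u j) * u) : ℤ) - (invLen u : ℤ)| = 1 }

/-- The transitive reduction `E_w(u)` of `Ẽ_w(u)`: edges `(a,b)` of `Ẽ_w(u)` such that
there is no directed path from `a` to `b` in `Ẽ_w(u)` using at least two edges. -/
def Ered {n : ℕ} (w u : Equiv.Perm (Fin n)) : Set (Fin n × Fin n) :=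
  { p | p ∈ Etilde w u ∧
      ¬ ∃ c : Fin n, (p.1, c) ∈ Etilde w u ∧
        Relation.TransGen (fun a b : Fin n => (a, b) ∈ Etilde w u) c p.2 }

/-- `E_w(u)^+`: edges `(a,b)` of `E_w(u)` with `a < b`. -/
def Eplus {n : ℕ} (w u : Equiv.Perm (Fin n)) : Set (Fin n × Fin n) :=
  { p ∈ Ered w u | p.1 < p.2 }

/-- `E_w(u)^-`: edges `(a,b)` of `E_w(u)` with `a > b`. -/
def Eminus {n : ℕ} (w u : Equiv.Perm (Fin n)) : Set (Fin n × Fin n) :=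
  { p ∈ Ered w u | p.2 < p.1 }

/-- The moment-map image `μ(u) = (u⁻¹(1), …, u⁻¹(n)) ∈ ℝⁿ`
(using values `1, …, n`, i.e. `Fin.val + 1`). -/
def mu {n : ℕ} (u : Equiv.Perm (Fin n)) : Fin n → ℝ :=
  fun k => ((u⁻¹ k : ℕ) : ℝ) + 1

/-- The standard basis vector `e_a` of `ℝⁿ`. -/
def stdB {n : ℕ} (a : Fin n) : Fin n → ℝ :=
  fun k => if k = a then 1 else 0

/-!
Exchanging the values of `u` at positions `i < j` changes the length by one exactly when no point
`(k, u k)` of the permutation lies in the open box spanned by `(i, u i)` and `(j, u j)`. Hence an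
edge of `Ẽ_w(u)` spans an empty box. Conversely, every inversion with an empty box is an edge, since
exchanging its values goes down from `u ≤ w`; splitting at the points of the box, every
inversion is joined by a directed path.

If `j < j'` and `u(j) < u(j')`, then the position `j` lies in the box of the second edge. If
`j' < j` and `u(i) < u(j')`, then `u(j) < u(j')`, as otherwise `j'` would lie in the box of the
first edge; so the second edge, preceded by the path of the inversion `(i, i')` and followed by that
of `(j', j)`, bypasses the edge from `u(i)` to `u(j)`, which is therefore not in the transitive
reduction.
-/

section Length

open Finset

variable {n : ℕ} {u : Perm (Fin n)} {i j : Fin n}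

/-- The inversions of `u`, as pairs of positions; there are `invLen u` of them. -/
def inversions (u : Perm (Fin n)) : Finset (Fin n × Fin n) :=
  {p | p.1 < p.2 ∧ u p.2 < u p.1}

theorem mem_inversions {p : Fin n × Fin n} :
    p ∈ inversions u ↔ p.1 < p.2 ∧ u p.2 < u p.1 := by
  simp [inversions]

/-- The positions `k` for which `(k, u k)` lies in the open box with opposite corners `(i, u i)` and
`(j, u j)`; it is empty unless `i < j`. The values `u i` and `u j` may come in either order. -/
def boxInterior (u : Perm (Fin n)) (i j : Fin n) : Finset (Fin n) :=
  {k ∈ Ioo i j | u k ∈ Ioo (u i ⊓ u j) (u i ⊔ u j)}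

theorem mem_boxInterior_of_lt (hu : u i < u j) {k : Fin n} :
    k ∈ boxInterior u i j ↔ (i < k ∧ k < j) ∧ u i < u k ∧ u k < u j := by
  simp only [boxInterior, mem_filter, mem_Ioo, inf_eq_left.2 hu.le, sup_eq_right.2 hu.le]

theorem mem_boxInterior_of_gt (hu : u j < u i) {k : Fin n} :
    k ∈ boxInterior u i j ↔ (i < k ∧ k < j) ∧ u j < u k ∧ u k < u i := by
  simp only [boxInterior, mem_filter, mem_Ioo, inf_eq_right.2 hu.le, sup_eq_left.2 hu.le]

theorem boxInterior_mul_swap (u : Perm (Fin n)) (i j : Fin n) :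
    boxInterior (u * swap i j) i j = boxInterior u i j := by
  refine filter_congr fun k hk ↦ ?_
  obtain ⟨hik, hkj⟩ := mem_Ioo.1 hk
  simp only [Perm.mul_apply, swap_apply_left, swap_apply_right,
    swap_apply_of_ne_of_ne hik.ne' hkj.ne, inf_comm (u j), sup_comm (u j)]

theorem card_inversions_mul_filter_lt (u σ : Perm (Fin n)) :
    #{p ∈ inversions (u * σ) | σ p.1 < σ p.2} =
      #{p ∈ inversions u | σ.symm p.1 < σ.symm p.2} := by
  refine card_equiv (σ.prodCongr σ) fun p ↦ ?_
  simp only [mem_filter, mem_inversions, Perm.mul_apply, prodCongr_apply, Prod.map_fst,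
    Prod.map_snd, symm_apply_apply]
  tauto

theorem swap_not_lt_swap_iff (hij : i < j) {p q : Fin n} (hpq : p < q) :
    ¬ swap i j p < swap i j q ↔ p = i ∧ q ≤ j ∨ q = j ∧ i ≤ p := by
  simp only [swap_apply_def]
  grind

/-- The inversions that `u` gains when its values at positions `i < j` with `u i < u j` are
exchanged, among the pairs of positions whose order `swap i j` reverses; the inversions of `u` and
`u * swap i j` at the other pairs are matched by applying `swap i j` to both positions. -/
def gainedInversions (u : Perm (Fin n)) (i j : Fin n) : Finset (Fin n × Fin n) :=
  insert (i, j) ({i} ×ˢ boxInterior u i j ∪ boxInterior u i j ×ˢ {j})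

theorem card_gainedInversions (u : Perm (Fin n)) (i j : Fin n) :
    #(gainedInversions u i j) = 2 * #(boxInterior u i j) + 1 := by
  have hi : i ∉ boxInterior u i j := by simp [boxInterior]
  have hj : j ∉ boxInterior u i j := by simp [boxInterior]
  have hdisj : Disjoint ({i} ×ˢ boxInterior u i j) (boxInterior u i j ×ˢ {j}) :=
    disjoint_product.2 (.inl (disjoint_singleton_left.2 hi))
  rw [gainedInversions, card_insert_of_notMem (by simp [hi, hj]), card_union_of_disjoint hdisj,
    card_product, card_product, card_singleton, card_singleton]
  ring

theorem inversions_mul_swap_filter_not_lt (hij : i < j) (hu : u i < u j) :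
    {p ∈ inversions (u * swap i j) | ¬ swap i j p.1 < swap i j p.2} =
      {p ∈ inversions u | ¬ swap i j p.1 < swap i j p.2} ∪ gainedInversions u i j := by
  ext ⟨p, q⟩
  have hinj : ∀ {a b}, u a = u b → a = b := fun h ↦ u.injective h
  simp only [gainedInversions, mem_union, mem_filter, mem_insert, mem_product, mem_singleton,
    mem_inversions, mem_boxInterior_of_lt hu, Perm.mul_apply, Prod.mk.injEq]
  by_cases hpq : p < q
  · rw [swap_not_lt_swap_iff hij hpq]
    simp only [swap_apply_def]
    grind
  · grind

theorem disjoint_inversions_gainedInversions (hu : u i < u j) :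
    Disjoint (inversions u) (gainedInversions u i j) := by
  rw [disjoint_left]
  rintro ⟨p, q⟩ hinv hgain
  simp only [gainedInversions, mem_insert, mem_union, mem_product, mem_singleton,
    mem_boxInterior_of_lt hu, Prod.mk.injEq] at hgain
  have := (mem_inversions.1 hinv).2
  grind

theorem invLen_mul_swap_of_lt (hij : i < j) (hu : u i < u j) :
    invLen (u * swap i j) = invLen u + 2 * #(boxInterior u i j) + 1 := by
  have hpreserved := card_inversions_mul_filter_lt u (swap i j)
  rw [symm_swap] at hpreserved
  have hreversed := congrArg card (inversions_mul_swap_filter_not_lt hij hu)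
  rw [card_union_of_disjoint ((disjoint_inversions_gainedInversions hu).mono_left
    (filter_subset _ _)), card_gainedInversions] at hreversed
  change #(inversions (u * swap i j)) = #(inversions u) + _ + 1
  rw [← card_filter_add_card_filter_not (s := inversions (u * swap i j))
      (fun p ↦ swap i j p.1 < swap i j p.2),
    ← card_filter_add_card_filter_not (s := inversions u) (fun p ↦ swap i j p.1 < swap i j p.2),
    hpreserved, hreversed]
  ring

theorem invLen_mul_swap_of_gt (hij : i < j) (hu : u j < u i) :
    invLen u = invLen (u * swap i j) + 2 * #(boxInterior u i j) + 1 := by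
  have h := invLen_mul_swap_of_lt (u := u * swap i j) hij (by simpa using hu)
  rwa [boxInterior_mul_swap, mul_assoc, swap_mul_self, mul_one] at h

theorem abs_invLen_mul_swap_sub_eq_one_iff (hij : i < j) :
    |(invLen (u * swap i j) : ℤ) - invLen u| = 1 ↔ boxInterior u i j = ∅ := by
  rw [← card_eq_zero]
  rcases lt_or_gt_of_ne (u.injective.ne hij.ne) with hu | hu
  · have := invLen_mul_swap_of_lt hij hu
    rw [abs_eq zero_le_one]
    omega
  · have := invLen_mul_swap_of_gt hij hu
    rw [abs_eq zero_le_one]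
    omega

end Length

section Edges

open Relation

variable {n : ℕ} {u v w τ : Perm (Fin n)} {i j k : Fin n}

theorem IsTransposition.bruhatLE_of_mul (hτ : IsTransposition τ) (hlen : invLen v < invLen (τ * v))
    (hle : BruhatLE (τ * v) w) : BruhatLE v w := by
  obtain ⟨m, c, hzero, hm, hstep⟩ := hle
  refine ⟨m + 1, fun k ↦ Nat.casesOn k v c, rfl, hm, ?_⟩
  rintro (_ | k) hk
  · change (∃ τ, IsTransposition τ ∧ c 0 = τ * v) ∧ invLen v < invLen (c 0)
    exact hzero ▸ ⟨⟨τ, hτ, rfl⟩, hlen⟩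
  · exact hstep k (by omega)

theorem mk_mem_etilde_iff :
    (u i, u j) ∈ Etilde w u ↔
      i < j ∧ BruhatLE (swap (u i) (u j) * u) w ∧ boxInterior u i j = ∅ := by
  have hbox (hij : i < j) :
      |(invLen (swap (u i) (u j) * u) : ℤ) - invLen u| = 1 ↔ boxInterior u i j = ∅ := by
    rw [← mul_swap_eq_swap_mul, abs_invLen_mul_swap_sub_eq_one_iff hij]
  constructor
  · rintro ⟨a, b, hab, heq, hle, hlen⟩
    obtain ⟨hia, hjb⟩ := Prod.mk.inj heq
    obtain rfl := u.injective hia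
    obtain rfl := u.injective hjb
    exact ⟨hab, hle, (hbox hab).1 hlen⟩
  · rintro ⟨hij, hle, hempty⟩
    exact ⟨i, j, hij, rfl, hle, (hbox hij).2 hempty⟩

theorem apply_lt_of_mem_etilde (hedge : (u i, u j) ∈ Etilde w u) (hik : i < k) (hkj : k < j)
    (hu : u i < u k) : u j < u k := by
  by_contra! hle
  have hkj' : u k < u j := hle.lt_of_ne (u.injective.ne hkj.ne)
  have hmem : k ∈ boxInterior u i j :=
    (mem_boxInterior_of_lt (hu.trans hkj')).2 ⟨⟨hik, hkj⟩, hu, hkj'⟩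
  simp [(mk_mem_etilde_iff.1 hedge).2.2] at hmem

theorem bruhatLE_swap_mul_of_gt (hle : BruhatLE u w) (hij : i < j) (hu : u j < u i) :
    BruhatLE (swap (u i) (u j) * u) w := by
  have hlen := invLen_mul_swap_of_gt hij hu
  rw [mul_swap_eq_swap_mul] at hlen
  refine IsTransposition.bruhatLE_of_mul ⟨u i, u j, hu.ne', rfl⟩ ?_ ?_ <;>
    rw [swap_mul_self_mul]
  · omega
  · exact hle

theorem transGen_etilde_of_gt (hle : BruhatLE u w) (hij : i < j) (hu : u j < u i) :
    TransGen (fun a b ↦ (a, b) ∈ Etilde w u) (u i) (u j) := by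
  induction hd : (j : ℕ) - i using Nat.strong_induction_on generalizing i j with
  | _ d ih =>
    obtain hempty | ⟨k, hk⟩ := (boxInterior u i j).eq_empty_or_nonempty
    · exact .single (mk_mem_etilde_iff.2 ⟨hij, bruhatLE_swap_mul_of_gt hle hij hu, hempty⟩)
    · obtain ⟨⟨hik, hkj⟩, hjk, hki⟩ := (mem_boxInterior_of_gt hu).1 hk
      exact (ih (k - i) (by omega) hik hki rfl).trans (ih (j - k) (by omega) hkj hjk rfl)

theorem notMem_ered_of_transGen {a b c : Fin n}
    (hab : TransGen (fun x y ↦ (x, y) ∈ Etilde w u) a b)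
    (hbc : TransGen (fun x y ↦ (x, y) ∈ Etilde w u) b c) : (a, c) ∉ Ered w u := by
  rintro ⟨-, hred⟩
  obtain ⟨d, had, hdb⟩ := TransGen.head'_iff.1 hab
  exact hred ⟨d, had, .trans_right hdb hbc⟩

theorem apply_lt_of_mem_ered_of_mem_etilde {i' j' : Fin n} (hle : BruhatLE u w)
    (hred : (u i, u j) ∈ Ered w u) (hedge : (u i', u j') ∈ Etilde w u)
    (hii' : i < i') (hu : u i' < u i) (hj'j : j' < j) : u j' < u i := by
  by_contra! hij'
  have hi'j' : i' < j' := (mk_mem_etilde_iff.1 hedge).1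
  have hii'j' : i < j' := hii'.trans hi'j'
  have hjj' : u j < u j' :=
    apply_lt_of_mem_etilde hred.1 hii'j' hj'j (hij'.lt_of_ne (u.injective.ne hii'j'.ne))
  exact notMem_ered_of_transGen (transGen_etilde_of_gt hle hii' hu)
    (.head hedge (transGen_etilde_of_gt hle hj'j hjj')) hred

end Edges

theorem stmt8_general {n : ℕ} {w u : Perm (Fin n)} {i j i' j' : Fin n} (hle : BruhatLE u w)
    (h1 : (u i, u j) ∈ Eplus w u) (h2 : (u i', u j') ∈ Etilde w u)
    (h3 : i < i') (h4 : i' < j) (h5 : u i' < u i) :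
    (j' < j → u j' < u i) ∧ (j < j' → u j' < u j) :=
  ⟨apply_lt_of_mem_ered_of_mem_etilde hle h1.1 h2 h3 h5,
    fun hjj' ↦ apply_lt_of_mem_etilde h2 h4 hjj' (h5.trans h1.2)⟩

theorem stmt8 {n : ℕ} (hn : 1 ≤ n) (w u : Equiv.Perm (Fin n)) (hle : BruhatLE u w)
    (i j i' j' : Fin n) (hij : i < j) (hi'j' : i' < j')
    (h1 : ((u i, u j) : Fin n × Fin n) ∈ Eplus w u)
    (h2 : ((u i', u j') : Fin n × Fin n) ∈ Eplus w u)
    (h3 : i < i') (h4 : i' < j) (h5 : u i' < u i) :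
    (j' < j → u j' < u i) ∧ (j < j' → u j' < u j) :=
  stmt8_general hle h1 h2.1.1 h3 h4 h5
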